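/- Let f : Λ(n)³ → ℤ satisfy the Duistermaat axioms. Then for any Lagrangian planes L₁, L₂, L₃: f(L₁, L₂, L₃) = f(L₃^{−1}, L₂^{−1}, L₁^{−1}), where L^{−1} := {(v, u) : (u, v) ∈ L}. -/

import Mathlib

/-!
The Duistermaat axioms determine the index, and `g(L₁, L₂, L₃) = f(L₃⁻¹, L₂⁻¹, L₁⁻¹)` satisfies them
too; hence `f = g`.

*Uniqueness* (`SatisfiesDuiAxioms.unique`). If `(x, t x)` and `(y, s y)` lie in a Lagrangian plane
`L` with `t ≠ s` real, then `x ⊥ y`, so at most `n` of the planes `G_t` fail to be transversal to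
`L`. Some `G_t` is therefore transversal to all of `L₁, L₂, L₃`, and the cocycle property expresses
`f(L₁, L₂, L₃)` through the values `f(Lᵢ, Lⱼ, G_t)`. A symplectic map carrying `G_t` to `G_∞` turns
`Lᵢ` and `Lⱼ` into graphs `G_A` and `G_B` of Hermitian matrices, and a shear together with the
normalization gives `f(G_A, G_B, G_∞) = n_-(B - A)`.

*Axioms for `g`* (`SatisfiesDuiAxioms.inverse`). The swap map reverses the sign of `ω`, so
conjugating by it preserves symplectic maps; the cocycle identity for `g` is the one for `f` read in
the reverse order. For the normalization, the rotation `(x, y) ↦ (y, -x)` identifies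
`g(G_0, G_A, G_∞)` with `f(G_∞, G_B, G_0)`, `B = -A`, and this is `n_-(-B)` also for singular `B`
(`SatisfiesDuiAxioms.vert_graph_zero`): take `r` with `r² - B = S²`, where `S` is Hermitian and
invertible, and use the cocycle identity with fourth plane `G_{r²}`. The terms `f(G_∞, G_B, G_{r²})`
and `f(G_∞, G_0, G_{r²})` are both equal to `f(G_∞, G_0, G_1)` and cancel, while
`f(G_B, G_0, G_{r²}) = n_-(r⁻² - S⁻²)`, and `r⁻² - S⁻² = (r⁻¹ S⁻¹) (-B) (r⁻¹ S⁻¹)` is congruent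
to `-B`.
-/

open Matrix

/-- The Hermitian symplectic space `ℂⁿ ⊕ ℂⁿ`. -/
abbrev SympSpace (n : ℕ) := (Fin n → ℂ) × (Fin n → ℂ)

/-- The symplectic form `ω((x₁,x₂),(y₁,y₂)) = ⟨x₁,y₂⟩ − ⟨x₂,y₁⟩`. -/
noncomputable def omegaForm {n : ℕ} (u v : SympSpace n) : ℂ :=
  star u.1 ⬝ᵥ v.2 - star u.2 ⬝ᵥ v.1

/-- A subspace is Lagrangian iff it coincides with its symplectic complement. -/
def IsLagrangian {n : ℕ} (L : Submodule ℂ (SympSpace n)) : Prop :=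
  ∀ v, v ∈ L ↔ ∀ u ∈ L, omegaForm u v = 0

/-- The Lagrangian Grassmannian `Λ(n)`. -/
abbrev LagGr (n : ℕ) := {L : Submodule ℂ (SympSpace n) // IsLagrangian L}

/-- The graph `G_M = {(x, Mx)}` of a matrix `M`. -/
noncomputable def graphOf {n : ℕ} (M : Matrix (Fin n) (Fin n) ℂ) :
    Submodule ℂ (SympSpace n) := LinearMap.graph M.mulVecLin

/-- The vertical subspace `G_∞ = 0 ⊕ ℂⁿ`. -/
noncomputable def vertSub (n : ℕ) : Submodule ℂ (SympSpace n) :=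
  (⊥ : Submodule ℂ (Fin n → ℂ)).prod (⊤ : Submodule ℂ (Fin n → ℂ))

/-- The negative index (Morse index) of a sesquilinear form: the maximal dimension of a
subspace on which it is negative definite. -/
noncomputable def formNegIdx {V : Type*} [AddCommGroup V] [Module ℂ V]
    (Q : V → V → ℂ) : ℕ :=
  sSup {d : ℕ | ∃ W : Submodule ℂ V, Module.finrank ℂ W = d ∧
    ∀ x ∈ W, x ≠ 0 → (Q x x).re < 0}

/-- The number of negative eigenvalues (Morse index) of a Hermitian matrix, as the
maximal dimension of a subspace on which the associated form is negative definite. -/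
noncomputable def negIdxM {n : ℕ} (A : Matrix (Fin n) (Fin n) ℂ) : ℕ :=
  formNegIdx (fun x y : Fin n → ℂ => star x ⬝ᵥ A.mulVec y)

/-- A symplectic transformation: a bijective linear map preserving `ω`. -/
def IsSymplecticMap {n : ℕ} (S : SympSpace n ≃ₗ[ℂ] SympSpace n) : Prop :=
  ∀ u v, omegaForm (S u) (S v) = omegaForm u v

/-- The Duistermaat axioms for `f : Λ(n)³ → ℤ`: normalization, symplectic invariance
and the cocycle property. -/
def SatisfiesDuiAxioms {n : ℕ} (f : LagGr n → LagGr n → LagGr n → ℤ) : Prop :=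
  (∀ (A : Matrix (Fin n) (Fin n) ℂ), A.IsHermitian →
    ∀ L₁ L₂ L₃ : LagGr n,
      L₁.val = graphOf (0 : Matrix (Fin n) (Fin n) ℂ) →
      L₂.val = graphOf A → L₃.val = vertSub n →
      f L₁ L₂ L₃ = negIdxM A) ∧
  (∀ S : SympSpace n ≃ₗ[ℂ] SympSpace n, IsSymplecticMap S →
    ∀ L₁ L₂ L₃ M₁ M₂ M₃ : LagGr n,
      M₁.val = (L₁.val).map S.toLinearMap →
      M₂.val = (L₂.val).map S.toLinearMap →
      M₃.val = (L₃.val).map S.toLinearMap →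
      f M₁ M₂ M₃ = f L₁ L₂ L₃) ∧
  (∀ L₁ L₂ L₃ L₄ : LagGr n,
    f L₁ L₂ L₃ - f L₁ L₂ L₄ + f L₁ L₃ L₄ - f L₂ L₃ L₄ = 0)

/-- The swap map `(u, v) ↦ (v, u)`; the image of a Lagrangian plane `L` under this map
is the inverse `L⁻¹` of the corresponding self-adjoint linear relation. -/
noncomputable def swapMap (n : ℕ) : SympSpace n →ₗ[ℂ] SympSpace n :=
  (LinearMap.snd ℂ (Fin n → ℂ) (Fin n → ℂ)).prod
    (LinearMap.fst ℂ (Fin n → ℂ) (Fin n → ℂ))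

/-! ### Lagrangian planes -/

open scoped ComplexOrder in
theorem eq_zero_of_star_dotProduct {n : ℕ} {x : Fin n → ℂ} (h : star x ⬝ᵥ x = 0) : x = 0 :=
  dotProduct_star_self_eq_zero.1 h

theorem mem_graphOf {n : ℕ} (A : Matrix (Fin n) (Fin n) ℂ) (x y : Fin n → ℂ) :
    (x, y) ∈ graphOf A ↔ y = A *ᵥ x := by
  simp [graphOf, LinearMap.mem_graph_iff]

theorem mem_vertSub {n : ℕ} (x y : Fin n → ℂ) :
    (x, y) ∈ vertSub n ↔ x = 0 := by
  simp [vertSub]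

theorem isLagrangian_graphOf {n : ℕ} {A : Matrix (Fin n) (Fin n) ℂ} (hA : A.IsHermitian) :
    IsLagrangian (graphOf A) := by
  have key : ∀ x y : Fin n → ℂ, star (A *ᵥ x) ⬝ᵥ y = star x ⬝ᵥ (A *ᵥ y) := by
    intro x y
    rw [star_mulVec, hA.eq, ← dotProduct_mulVec]
  rintro ⟨x, y⟩
  rw [mem_graphOf]
  constructor
  · rintro rfl ⟨u, v⟩ huv
    rw [mem_graphOf] at huv
    subst huv
    simp [omegaForm, key]
  · intro h
    have h' : ∀ u : Fin n → ℂ, star u ⬝ᵥ (y - A *ᵥ x) = 0 := by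
      intro u
      have := h (u, A *ᵥ u) ((mem_graphOf _ _ _).2 rfl)
      simpa [omegaForm, key, dotProduct_sub] using this
    have := h' (y - A *ᵥ x)
    exact sub_eq_zero.1 (eq_zero_of_star_dotProduct this)

theorem isLagrangian_vertSub (n : ℕ) : IsLagrangian (vertSub n) := by
  rintro ⟨x, y⟩
  rw [mem_vertSub]
  constructor
  · rintro rfl ⟨u, v⟩ huv
    rw [mem_vertSub] at huv
    subst huv
    simp [omegaForm]
  · intro h
    have := h (0, x) ((mem_vertSub _ _).2 rfl)
    exact eq_zero_of_star_dotProduct (by simpa [omegaForm] using this)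

/-- The graph of a Hermitian matrix as a point of `Λ(n)`. -/
noncomputable def lagGraph {n : ℕ} (A : Matrix (Fin n) (Fin n) ℂ) (hA : A.IsHermitian) :
    LagGr n := ⟨graphOf A, isLagrangian_graphOf hA⟩

/-- The vertical plane `G_∞` as a point of `Λ(n)`. -/
noncomputable def lagVert (n : ℕ) : LagGr n := ⟨vertSub n, isLagrangian_vertSub n⟩

/-- Lagrangian planes are preserved by maps that scale `ω` by a nonzero constant; the constants
`1` (symplectic maps) and `-1` (the swap map) are the ones needed. -/
theorem IsLagrangian.map {n : ℕ} {L : Submodule ℂ (SympSpace n)} (hL : IsLagrangian L)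
    (S : SympSpace n ≃ₗ[ℂ] SympSpace n) {c : ℂ} (hc : c ≠ 0)
    (hS : ∀ u v, omegaForm (S u) (S v) = c * omegaForm u v) :
    IsLagrangian (L.map S.toLinearMap) := by
  intro v
  obtain ⟨w, rfl⟩ := S.surjective v
  have : S w ∈ L.map S.toLinearMap ↔ w ∈ L := by
    simp
  rw [this, hL w]
  constructor
  · rintro h _ ⟨u, hu, rfl⟩
    simp [hS, h u hu]
  · intro h u hu
    have := h (S u) ⟨u, hu, rfl⟩
    rw [hS] at this
    exact (mul_eq_zero.1 this).resolve_left hc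

/-- The action of symplectic maps on `Λ(n)`. -/
noncomputable def lagMap {n : ℕ} (S : SympSpace n ≃ₗ[ℂ] SympSpace n) (hS : IsSymplecticMap S)
    (L : LagGr n) : LagGr n :=
  ⟨L.val.map S.toLinearMap,
    L.property.map S one_ne_zero fun u v => by rw [one_mul]; exact hS u v⟩

theorem mem_lagMap {n : ℕ} (S : SympSpace n ≃ₗ[ℂ] SympSpace n) (hS : IsSymplecticMap S)
    (L : LagGr n) (v : SympSpace n) : v ∈ (lagMap S hS L).val ↔ S.symm v ∈ L.val :=
  Submodule.mem_map_equiv (e := S) (p := L.val)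

theorem SatisfiesDuiAxioms.map {n : ℕ} {f : LagGr n → LagGr n → LagGr n → ℤ}
    (hf : SatisfiesDuiAxioms f) (S : SympSpace n ≃ₗ[ℂ] SympSpace n) (hS : IsSymplecticMap S)
    (L₁ L₂ L₃ : LagGr n) :
    f (lagMap S hS L₁) (lagMap S hS L₂) (lagMap S hS L₃) = f L₁ L₂ L₃ :=
  hf.2.1 S hS L₁ L₂ L₃ _ _ _ rfl rfl rfl

/-! ### Elementary symplectic maps -/

/-- The shear `(x, y) ↦ (x, y + A x)`. -/
noncomputable def shear {n : ℕ} (A : Matrix (Fin n) (Fin n) ℂ) :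
    SympSpace n ≃ₗ[ℂ] SympSpace n where
  toFun u := (u.1, u.2 + A *ᵥ u.1)
  invFun u := (u.1, u.2 - A *ᵥ u.1)
  map_add' u v := by
    ext <;> simp [mulVec_add]; ring
  map_smul' c u := by
    ext <;> simp [mulVec_smul]
  left_inv u := by simp
  right_inv u := by simp

theorem shear_symplectic {n : ℕ} {A : Matrix (Fin n) (Fin n) ℂ} (hA : A.IsHermitian) :
    IsSymplecticMap (shear A) := by
  intro u v
  have key : star (A *ᵥ u.1) ⬝ᵥ v.1 = star u.1 ⬝ᵥ (A *ᵥ v.1) := by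
    rw [star_mulVec, hA.eq, ← dotProduct_mulVec]
  simp [omegaForm, shear, key]

/-- The complex structure `(x, y) ↦ (y, -x)`. -/
noncomputable def rot (n : ℕ) : SympSpace n ≃ₗ[ℂ] SympSpace n where
  toFun u := (u.2, -u.1)
  invFun u := (-u.2, u.1)
  map_add' u v := by
    ext <;> simp; ring
  map_smul' c u := by
    ext <;> simp
  left_inv u := by simp
  right_inv u := by simp

theorem rot_symplectic (n : ℕ) : IsSymplecticMap (rot n) := by
  intro u v
  simp [omegaForm, rot]; ring

/-- The map `(x, y) ↦ (S x, S⁻¹ y)`, with the inverse of `S` given as `S'`. -/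
noncomputable def dilate {n : ℕ} (S S' : Matrix (Fin n) (Fin n) ℂ) (h : S * S' = 1)
    (h' : S' * S = 1) : SympSpace n ≃ₗ[ℂ] SympSpace n where
  toFun u := (S *ᵥ u.1, S' *ᵥ u.2)
  invFun u := (S' *ᵥ u.1, S *ᵥ u.2)
  map_add' u v := by simp [mulVec_add]
  map_smul' c u := by simp [mulVec_smul]
  left_inv u := by simp [h, h']
  right_inv u := by simp [h, h']

theorem dilate_symplectic {n : ℕ} {S S' : Matrix (Fin n) (Fin n) ℂ} (h : S * S' = 1)
    (h' : S' * S = 1) (hS : S.IsHermitian) (hS' : S'.IsHermitian) :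
    IsSymplecticMap (dilate S S' h h') := by
  intro u v
  simp only [omegaForm, dilate, LinearEquiv.coe_mk, LinearMap.coe_mk, AddHom.coe_mk]
  rw [star_mulVec, star_mulVec, hS.eq, hS'.eq, ← dotProduct_mulVec, ← dotProduct_mulVec,
    mulVec_mulVec, mulVec_mulVec, h, h', one_mulVec, one_mulVec]

theorem lagMap_shear_graph {n : ℕ} {A B : Matrix (Fin n) (Fin n) ℂ} (hA : A.IsHermitian)
    (hB : B.IsHermitian) {C : Matrix (Fin n) (Fin n) ℂ} (hC : C.IsHermitian) (h : C = B + A) :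
    lagMap (shear A) (shear_symplectic hA) (lagGraph B hB) = lagGraph C hC := by
  subst h
  ext1; ext ⟨x, y⟩
  rw [mem_lagMap]
  change (x, y - A *ᵥ x) ∈ graphOf B ↔ (x, y) ∈ graphOf (B + A)
  rw [mem_graphOf, mem_graphOf, add_mulVec, sub_eq_iff_eq_add]

theorem lagMap_shear_vert {n : ℕ} {A : Matrix (Fin n) (Fin n) ℂ} (hA : A.IsHermitian) :
    lagMap (shear A) (shear_symplectic hA) (lagVert n) = lagVert n := by
  ext1; ext ⟨x, y⟩
  rw [mem_lagMap]
  change (x, y - A *ᵥ x) ∈ vertSub n ↔ (x, y) ∈ vertSub n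
  rw [mem_vertSub, mem_vertSub]

theorem lagMap_rot_vert (n : ℕ) :
    lagMap (rot n) (rot_symplectic n) (lagVert n) = lagGraph 0 isHermitian_zero := by
  ext1; ext ⟨x, y⟩
  rw [mem_lagMap]
  change (-y, x) ∈ vertSub n ↔ (x, y) ∈ graphOf 0
  rw [mem_vertSub, mem_graphOf]
  simp

theorem lagMap_rot_zero (n : ℕ) :
    lagMap (rot n) (rot_symplectic n) (lagGraph 0 isHermitian_zero) = lagVert n := by
  ext1; ext ⟨x, y⟩
  rw [mem_lagMap]
  change (-y, x) ∈ graphOf 0 ↔ (x, y) ∈ vertSub n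
  rw [mem_vertSub, mem_graphOf]
  simp

theorem lagMap_rot_graph {n : ℕ} {B C : Matrix (Fin n) (Fin n) ℂ} (hB : B.IsHermitian)
    (hC : C.IsHermitian) (h : B * C = -1) (h' : C * B = -1) :
    lagMap (rot n) (rot_symplectic n) (lagGraph B hB) = lagGraph C hC := by
  ext1; ext ⟨x, y⟩
  rw [mem_lagMap]
  change (-y, x) ∈ graphOf B ↔ (x, y) ∈ graphOf C
  rw [mem_graphOf, mem_graphOf]
  constructor
  · rintro rfl
    rw [mulVec_mulVec, h', mulVec_neg, neg_mulVec, one_mulVec, neg_neg]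
  · rintro rfl
    rw [mulVec_neg, mulVec_mulVec, h, neg_mulVec, one_mulVec, neg_neg]

theorem lagMap_dilate_vert {n : ℕ} {S S' : Matrix (Fin n) (Fin n) ℂ} (h : S * S' = 1)
    (h' : S' * S = 1) (hS : S.IsHermitian) (hS' : S'.IsHermitian) :
    lagMap (dilate S S' h h') (dilate_symplectic h h' hS hS') (lagVert n) = lagVert n := by
  ext1; ext ⟨x, y⟩
  rw [mem_lagMap]
  change (S' *ᵥ x, S *ᵥ y) ∈ vertSub n ↔ (x, y) ∈ vertSub n
  rw [mem_vertSub, mem_vertSub]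
  constructor
  · intro hx
    have := congrArg (S *ᵥ ·) hx
    simpa [h] using this
  · rintro rfl
    simp

theorem lagMap_dilate_graph {n : ℕ} {S S' : Matrix (Fin n) (Fin n) ℂ} (h : S * S' = 1)
    (h' : S' * S = 1) (hS : S.IsHermitian) (hS' : S'.IsHermitian)
    {B C : Matrix (Fin n) (Fin n) ℂ} (hB : B.IsHermitian) (hC : C.IsHermitian)
    (hBC : C = S' * B * S') :
    lagMap (dilate S S' h h') (dilate_symplectic h h' hS hS') (lagGraph B hB) =
      lagGraph C hC := by
  subst hBC
  ext1; ext ⟨x, y⟩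
  rw [mem_lagMap]
  change (S' *ᵥ x, S *ᵥ y) ∈ graphOf B ↔ (x, y) ∈ graphOf (S' * B * S')
  rw [mem_graphOf, mem_graphOf]
  constructor
  · intro hx
    have := congrArg (S' *ᵥ ·) hx
    simpa [h', Matrix.mul_assoc] using this
  · rintro rfl
    simp [← Matrix.mul_assoc, h]

/-! ### Uniqueness of the index -/

theorem SatisfiesDuiAxioms.graph_graph_vert {n : ℕ} {f : LagGr n → LagGr n → LagGr n → ℤ}
    (hf : SatisfiesDuiAxioms f) {A B : Matrix (Fin n) (Fin n) ℂ} (hA : A.IsHermitian)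
    (hB : B.IsHermitian) :
    f (lagGraph A hA) (lagGraph B hB) (lagVert n) = negIdxM (B - A) := by
  rw [← hf.map (shear (-A)) (shear_symplectic hA.neg),
    lagMap_shear_graph hA.neg hA isHermitian_zero (by simp),
    lagMap_shear_graph hA.neg hB (hB.sub hA) (by rw [sub_eq_add_neg]), lagMap_shear_vert hA.neg]
  exact hf.1 _ (hB.sub hA) _ _ _ rfl rfl rfl

/-- A Lagrangian plane transversal to `G_∞` is the graph of a Hermitian matrix. -/
theorem exists_eq_lagGraph {n : ℕ} (L : LagGr n) (hL : ∀ y, (0, y) ∈ L.val → y = 0) :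
    ∃ A, ∃ hA : A.IsHermitian, L = lagGraph A hA := by
  obtain ⟨L, hLag⟩ := L
  simp only at hL
  have hinj : Function.Injective (Prod.fst ∘ L.subtype) := by
    rintro ⟨⟨x, y⟩, hxy⟩ ⟨⟨x', y'⟩, hxy'⟩ h
    simp only [Function.comp, Submodule.subtype_apply] at h
    subst h
    have : (0, y - y') ∈ L := by simpa using L.sub_mem hxy hxy'
    have := sub_eq_zero.1 (hL _ this)
    subst this
    rfl
  -- A functional vanishing on the projection of `L` to the first factor yields a vector `(0, w)`
  -- in `L^ω = L`.
  have hsurj : Function.Surjective (Prod.fst ∘ L.subtype) := by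
    let p : Submodule ℂ (Fin n → ℂ) := L.map (LinearMap.fst ℂ _ _)
    have hp : p = ⊤ := by
      by_contra hne
      obtain ⟨φ, hφ, hker⟩ := Submodule.exists_le_ker_of_lt_top p (lt_top_iff_ne_top.2 hne)
      obtain ⟨w, rfl⟩ := (dotProductEquiv ℂ (Fin n)).surjective φ
      apply hφ
      have hw : (0, star w) ∈ L := by
        rw [hLag]
        rintro ⟨u, v⟩ huv
        have : u ∈ p := ⟨(u, v), huv, rfl⟩
        have : w ⬝ᵥ u = 0 := hker this
        have h2 : star u ⬝ᵥ star w = 0 := by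
          rw [star_dotProduct_star, this, star_zero]
        simp [omegaForm, h2]
      have := hL _ hw
      rw [star_eq_zero] at this
      rw [this, map_zero]
    intro x
    have hx : x ∈ p := hp ▸ Submodule.mem_top
    obtain ⟨u, hu, rfl⟩ := hx
    exact ⟨⟨u, hu⟩, rfl⟩
  obtain ⟨φ, hφ⟩ := Submodule.exists_eq_graph ⟨hinj, hsurj⟩
  have hgr : L = graphOf (LinearMap.toMatrix' φ) := by
    rw [hφ, graphOf, ← Matrix.toLin'_apply', Matrix.toLin'_toMatrix']
  refine ⟨LinearMap.toMatrix' φ, ?_, Subtype.ext hgr⟩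
  set A := LinearMap.toMatrix' φ
  ext i j
  have hi : ((Pi.single i 1 : Fin n → ℂ), A *ᵥ Pi.single i 1) ∈ L := by
    rw [hgr, mem_graphOf]
  have hj : ((Pi.single j 1 : Fin n → ℂ), A *ᵥ Pi.single j 1) ∈ L := by
    rw [hgr, mem_graphOf]
  have := (hLag _).1 hj _ hi
  simp [omegaForm] at this
  exact (sub_eq_zero.1 this).symm

/-- The scalar matrix `t`, for `t` real; its graph is `G_t = {(x, t x)}`. -/
noncomputable def scal (n : ℕ) (t : ℝ) : Matrix (Fin n) (Fin n) ℂ := (t : ℂ) • 1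

theorem scal_mulVec {n : ℕ} (t : ℝ) (x : Fin n → ℂ) : scal n t *ᵥ x = (t : ℂ) • x := by
  simp [scal, smul_mulVec]

theorem isHermitian_scal (n : ℕ) (t : ℝ) : (scal n t).IsHermitian := by
  simp [scal, IsHermitian, conjTranspose_smul]

/-- If `(x, t x)` and `(y, s y)` lie in `L` with `t ≠ s` real, then `x ⊥ y`; hence only finitely
many of the planes `G_t` fail to be transversal to `L`. -/
theorem finite_not_transversal {n : ℕ} (L : LagGr n) :
    {t : ℝ | ∃ x : Fin n → ℂ, x ≠ 0 ∧ (x, (t : ℂ) • x) ∈ L.val}.Finite := by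
  set T := {t : ℝ | ∃ x : Fin n → ℂ, x ≠ 0 ∧ (x, (t : ℂ) • x) ∈ L.val} with hT
  have hch : ∀ t : T, ∃ x : Fin n → ℂ, x ≠ 0 ∧ (x, (t.val : ℂ) • x) ∈ L.val := fun t => t.2
  choose x hx0 hx using hch
  have horth : ∀ s t : T, s ≠ t → star (x s) ⬝ᵥ x t = 0 := by
    intro s t hst
    have h := (L.property _).1 (hx t) _ (hx s)
    simp only [omegaForm, star_smul, dotProduct_smul, smul_dotProduct, smul_eq_mul] at h
    have hne : ((t.val : ℂ) - s.val) ≠ 0 := by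
      rw [sub_ne_zero]
      exact fun h => hst (Subtype.ext (Complex.ofReal_injective h).symm)
    have h2 : ((t.val : ℂ) - s.val) * (star (x s) ⬝ᵥ x t) = 0 := by
      simpa [sub_mul] using h
    exact (mul_eq_zero.1 h2).resolve_left hne
  have hli : LinearIndependent ℂ x := by
    rw [linearIndependent_iff']
    intro s c hc i hi
    have h := congrArg (star (x i) ⬝ᵥ ·) hc
    simp only [dotProduct_sum, dotProduct_smul, dotProduct_zero] at h
    rw [Finset.sum_eq_single i (fun j _ hj => by rw [horth i j hj.symm, smul_zero])
      (fun h => (h hi).elim)] at h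
    rw [smul_eq_mul] at h
    refine (mul_eq_zero.1 h).resolve_right fun h0 => hx0 i ?_
    exact eq_zero_of_star_dotProduct h0
  have : Finite T := hli.finite
  exact Set.toFinite T

/-- Two indices agree on `(L₁, L₂, G_t)` when `L₁` and `L₂` are transversal to `G_t`: a symplectic
map carries `G_t` to `G_∞`, hence `L₁` and `L₂` to graphs, where the normalization applies. -/
theorem SatisfiesDuiAxioms.eq_of_transversal {n : ℕ} {f g : LagGr n → LagGr n → LagGr n → ℤ}
    (hf : SatisfiesDuiAxioms f) (hg : SatisfiesDuiAxioms g) (L₁ L₂ : LagGr n) (t : ℝ)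
    (h₁ : ∀ x, (x, (t : ℂ) • x) ∈ L₁.val → x = 0) (h₂ : ∀ x, (x, (t : ℂ) • x) ∈ L₂.val → x = 0) :
    f L₁ L₂ (lagGraph (scal n t) (isHermitian_scal n t)) =
      g L₁ L₂ (lagGraph (scal n t) (isHermitian_scal n t)) := by
  have hH := (isHermitian_scal n t).neg
  have key : ∀ L : LagGr n, (∀ x, (x, (t : ℂ) • x) ∈ L.val → x = 0) →
      ∃ A, ∃ hA : A.IsHermitian, lagMap (rot n) (rot_symplectic n)
        (lagMap (shear (-scal n t)) (shear_symplectic hH) L) = lagGraph A hA := by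
    intro L hL
    apply exists_eq_lagGraph
    intro y hy
    rw [mem_lagMap, mem_lagMap] at hy
    change (-y, 0 - (-scal n t) *ᵥ (-y)) ∈ L.val at hy
    rw [neg_mulVec, scal_mulVec, zero_sub, neg_neg] at hy
    exact neg_eq_zero.1 (hL _ hy)
  obtain ⟨A, hA, hA'⟩ := key L₁ h₁
  obtain ⟨B, hB, hB'⟩ := key L₂ h₂
  have hv := lagMap_shear_graph hH (isHermitian_scal n t) isHermitian_zero (by simp)
  rw [← hf.map _ (shear_symplectic hH), ← hf.map _ (rot_symplectic n),
    ← hg.map _ (shear_symplectic hH), ← hg.map _ (rot_symplectic n), hA', hB', hv,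
    lagMap_rot_zero, hf.graph_graph_vert, hg.graph_graph_vert]

/-- The Duistermaat axioms determine the index. -/
theorem SatisfiesDuiAxioms.unique {n : ℕ} {f g : LagGr n → LagGr n → LagGr n → ℤ}
    (hf : SatisfiesDuiAxioms f) (hg : SatisfiesDuiAxioms g) (L₁ L₂ L₃ : LagGr n) :
    f L₁ L₂ L₃ = g L₁ L₂ L₃ := by
  obtain ⟨t, ht⟩ := (((finite_not_transversal L₁).union (finite_not_transversal L₂)).union
    (finite_not_transversal L₃)).infinite_compl.nonempty
  simp only [Set.mem_compl_iff, Set.mem_union, Set.mem_ofPred_eq, not_or, not_exists, not_and']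
    at ht
  obtain ⟨⟨h₁, h₂⟩, h₃⟩ := ht
  have h₁' := fun x hx => not_not.1 (h₁ x hx)
  have h₂' := fun x hx => not_not.1 (h₂ x hx)
  have h₃' := fun x hx => not_not.1 (h₃ x hx)
  have e₁ := hf.eq_of_transversal hg L₁ L₂ t h₁' h₂'
  have e₂ := hf.eq_of_transversal hg L₁ L₃ t h₁' h₃'
  have e₃ := hf.eq_of_transversal hg L₂ L₃ t h₂' h₃'
  have c := hf.2.2 L₁ L₂ L₃ (lagGraph (scal n t) (isHermitian_scal n t))
  have c' := hg.2.2 L₁ L₂ L₃ (lagGraph (scal n t) (isHermitian_scal n t))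
  linarith

/-! ### The index of `(G_∞, G_B, G_0)` -/

/-- The Morse index is invariant under congruence by an invertible matrix `P`. -/
theorem negIdxM_congr {n : ℕ} {A P P' : Matrix (Fin n) (Fin n) ℂ} (h : P * P' = 1)
    (h' : P' * P = 1) : negIdxM (Pᴴ * A * P) = negIdxM A := by
  have hle : ∀ (A P P' : Matrix (Fin n) (Fin n) ℂ), P' * P = 1 → ∀ d : ℕ,
      (∃ W : Submodule ℂ (Fin n → ℂ), Module.finrank ℂ W = d ∧
        ∀ x ∈ W, x ≠ 0 → (star x ⬝ᵥ (Pᴴ * A * P) *ᵥ x).re < 0) →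
      ∃ W : Submodule ℂ (Fin n → ℂ), Module.finrank ℂ W = d ∧
        ∀ x ∈ W, x ≠ 0 → (star x ⬝ᵥ A *ᵥ x).re < 0 := by
    rintro A P P' h' d ⟨W, hd, hW⟩
    have hinj : Function.Injective P.mulVecLin := by
      refine Function.LeftInverse.injective (g := P'.mulVecLin) fun x => ?_
      simp [h']
    refine ⟨W.map P.mulVecLin, ?_, ?_⟩
    · rw [← hd]
      exact (Submodule.equivMapOfInjective _ hinj W).finrank_eq.symm
    · rintro _ ⟨x, hx, rfl⟩ hne
      have hx0 : x ≠ 0 := by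
        rintro rfl
        simp at hne
      have := hW x hx hx0
      rw [mulVecLin_apply, star_mulVec, ← dotProduct_mulVec, mulVec_mulVec, mulVec_mulVec]
      exact this
  unfold negIdxM formNegIdx
  congr 1
  ext d
  refine ⟨hle A P P' h' d, fun hd => hle (Pᴴ * A * P) P' P h d ?_⟩
  have hP : P'ᴴ * Pᴴ = 1 := by rw [← conjTranspose_mul, h, conjTranspose_one]
  have e : P'ᴴ * (Pᴴ * A * P) * P' = A := by
    calc P'ᴴ * (Pᴴ * A * P) * P' = (P'ᴴ * Pᴴ) * A * (P * P') := by noncomm_ring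
      _ = A := by rw [hP, h, Matrix.one_mul, Matrix.mul_one]
  rw [e]
  exact hd

/-- For some `r > 0`, `r² - B` has an invertible Hermitian square root `S`, with inverse `S'`. -/
theorem exists_sqrt_sub {n : ℕ} {B : Matrix (Fin n) (Fin n) ℂ} (hB : B.IsHermitian) :
    ∃ r : ℝ, 0 < r ∧ ∃ S S' : Matrix (Fin n) (Fin n) ℂ, S.IsHermitian ∧ S'.IsHermitian ∧
      S * S' = 1 ∧ S' * S = 1 ∧ S * S = scal n (r ^ 2) - B := by
  set d := hB.eigenvalues
  obtain ⟨r, hr, hrd⟩ : ∃ r : ℝ, 0 < r ∧ ∀ i, d i < r ^ 2 := by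
    refine ⟨1 + ∑ i, |d i|, by positivity, fun i => ?_⟩
    have h1 : d i ≤ ∑ i, |d i| := (le_abs_self _).trans
      (Finset.single_le_sum (f := fun i => |d i|) (fun _ _ => abs_nonneg _) (Finset.mem_univ i))
    have h2 : 0 ≤ ∑ i, |d i| := by positivity
    nlinarith
  set U : Matrix (Fin n) (Fin n) ℂ := hB.eigenvectorUnitary.val
  have hU : U * Uᴴ = 1 := Unitary.coe_mul_star_self hB.eigenvectorUnitary
  have hU' : Uᴴ * U = 1 := Unitary.coe_star_mul_self hB.eigenvectorUnitary
  have hBd : B = U * diagonal (fun i => (d i : ℂ)) * Uᴴ := by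
    have := hB.spectral_theorem
    rw [Unitary.conjStarAlgAut_apply] at this
    exact this
  set s : Fin n → ℝ := fun i => Real.sqrt (r ^ 2 - d i)
  have hs : ∀ i, s i ≠ 0 := fun i => (Real.sqrt_pos.2 (sub_pos.2 (hrd i))).ne'
  have hss : ∀ i, s i * s i = r ^ 2 - d i := fun i =>
    Real.mul_self_sqrt (sub_pos.2 (hrd i)).le
  have hmul : ∀ a b : Fin n → ℂ, (U * diagonal a * Uᴴ) * (U * diagonal b * Uᴴ) =
      U * diagonal (fun i => a i * b i) * Uᴴ := by
    intro a b
    calc (U * diagonal a * Uᴴ) * (U * diagonal b * Uᴴ)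
        = U * diagonal a * (Uᴴ * U) * diagonal b * Uᴴ := by noncomm_ring
      _ = _ := by rw [hU', Matrix.mul_one, Matrix.mul_assoc U, diagonal_mul_diagonal]
  have hherm : ∀ a : Fin n → ℝ, (U * diagonal (fun i => (a i : ℂ)) * Uᴴ).IsHermitian := by
    intro a
    refine isHermitian_mul_mul_conjTranspose U ?_
    rw [IsHermitian, diagonal_conjTranspose]
    congr 1
    ext i
    simp
  have hone : U * diagonal (fun _ => (1 : ℂ)) * Uᴴ = 1 := by
    rw [diagonal_one, Matrix.mul_one, hU]
  refine ⟨r, hr, U * diagonal (fun i => (s i : ℂ)) * Uᴴ,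
    U * diagonal (fun i => (((s i)⁻¹ : ℝ) : ℂ)) * Uᴴ, hherm _, hherm _, ?_, ?_, ?_⟩
  · rw [hmul, ← hone]
    congr 3
    ext i
    have : (s i : ℂ) ≠ 0 := Complex.ofReal_ne_zero.2 (hs i)
    simp [this]
  · rw [hmul, ← hone]
    congr 3
    ext i
    have : (s i : ℂ) ≠ 0 := Complex.ofReal_ne_zero.2 (hs i)
    simp [this]
  · have hsc : scal n (r ^ 2) = U * diagonal (fun _ => ((r ^ 2 : ℝ) : ℂ)) * Uᴴ := by
      rw [← smul_one_eq_diagonal, scal, Matrix.mul_smul, Matrix.smul_mul, Matrix.mul_one, hU]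
    rw [hmul, hsc, hBd, ← Matrix.sub_mul, ← Matrix.mul_sub, diagonal_sub]
    congr 3
    ext i
    rw [← Complex.ofReal_mul, hss, Complex.ofReal_sub]

/-- `f(G_∞, G_0, G_D)` does not depend on the positive definite matrix `D = S²`. -/
theorem SatisfiesDuiAxioms.vert_zero_square {n : ℕ} {f : LagGr n → LagGr n → LagGr n → ℤ}
    (hf : SatisfiesDuiAxioms f) {S S' D : Matrix (Fin n) (Fin n) ℂ} (hS : S.IsHermitian)
    (hS' : S'.IsHermitian) (h : S * S' = 1) (h' : S' * S = 1) (hD : D.IsHermitian)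
    (hDS : S * S = D) :
    f (lagVert n) (lagGraph 0 isHermitian_zero) (lagGraph D hD) =
      f (lagVert n) (lagGraph 0 isHermitian_zero) (lagGraph 1 isHermitian_one) := by
  rw [← hf.map _ (dilate_symplectic h h' hS hS'), lagMap_dilate_vert h h' hS hS',
    lagMap_dilate_graph h h' hS hS' isHermitian_zero isHermitian_zero (by simp),
    lagMap_dilate_graph h h' hS hS' hD isHermitian_one]
  rw [← hDS, ← Matrix.mul_assoc, h', Matrix.one_mul, h]

/-- The cocycle identity with fourth plane `G_{r²}`, where `r² - B` is positive definite: two of the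
terms cancel, and the remaining one, `f(G_B, G_0, G_{r²})`, is a Morse index. -/
theorem SatisfiesDuiAxioms.vert_graph_zero {n : ℕ} {f : LagGr n → LagGr n → LagGr n → ℤ}
    (hf : SatisfiesDuiAxioms f) {B : Matrix (Fin n) (Fin n) ℂ} (hB : B.IsHermitian) :
    f (lagVert n) (lagGraph B hB) (lagGraph 0 isHermitian_zero) = negIdxM (-B) := by
  obtain ⟨r, hr, S, S', hS, hS', h, h', hSS⟩ := exists_sqrt_sub hB
  have hC := isHermitian_scal n (r ^ 2)
  have hrC : (r : ℂ) ≠ 0 := Complex.ofReal_ne_zero.2 hr.ne'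
  have hscal : ∀ a b : ℝ, scal n a * scal n b = scal n (a * b) := by
    intro a b
    rw [scal, scal, scal, Matrix.smul_mul, Matrix.one_mul, smul_smul, Complex.ofReal_mul]
  have hscal1 : scal n 1 = 1 := by simp [scal]
  have hr1 : r * r⁻¹ = 1 := mul_inv_cancel₀ hr.ne'
  have hr1' : r⁻¹ * r = 1 := inv_mul_cancel₀ hr.ne'
  have c := hf.2.2 (lagVert n) (lagGraph B hB) (lagGraph 0 isHermitian_zero) (lagGraph _ hC)
  have e₁ : f (lagVert n) (lagGraph B hB) (lagGraph _ hC) =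
      f (lagVert n) (lagGraph 0 isHermitian_zero) (lagGraph 1 isHermitian_one) := by
    rw [← hf.map _ (shear_symplectic hB.neg), lagMap_shear_vert hB.neg,
      lagMap_shear_graph hB.neg hB isHermitian_zero (by simp),
      lagMap_shear_graph hB.neg hC (hC.sub hB) (by rw [sub_eq_add_neg]),
      hf.vert_zero_square hS hS' h h' _ hSS]
  have e₂ := hf.vert_zero_square (isHermitian_scal n r) (isHermitian_scal n r⁻¹)
    (by rw [hscal, hr1, hscal1]) (by rw [hscal, hr1', hscal1]) hC (by rw [hscal, pow_two])
  have hSS' : (S' * S').IsHermitian := by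
    rw [IsHermitian, conjTranspose_mul, hS'.eq]
  have hinv : (S * S) * (S' * S') = 1 := by
    rw [Matrix.mul_assoc, ← Matrix.mul_assoc S S', h, Matrix.one_mul, h]
  have hinv' : (S' * S') * (S * S) = 1 := by
    rw [Matrix.mul_assoc, ← Matrix.mul_assoc S' S, h', Matrix.one_mul, h']
  have hCi := isHermitian_scal n (r⁻¹ ^ 2)
  have hCC : scal n (r ^ 2) * scal n (r⁻¹ ^ 2) = 1 := by
    rw [hscal, ← mul_pow, hr1, one_pow, hscal1]
  have hCC' : scal n (r⁻¹ ^ 2) * scal n (r ^ 2) = 1 := by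
    rw [hscal, ← mul_pow, hr1', one_pow, hscal1]
  have e₃ : f (lagGraph B hB) (lagGraph 0 isHermitian_zero) (lagGraph _ hC) = negIdxM (-B) := by
    -- Shearing by `-r²` and rotating carries `G_{r²}` to `G_∞`, `G_0` to `G_{r⁻²}` and `G_B` to
    -- the graph of `(r² - B)⁻¹ = S'²`.
    have hBC : B + -scal n (r ^ 2) = -(S * S) := by rw [hSS]; abel
    rw [← hf.map _ (shear_symplectic hC.neg),
      lagMap_shear_graph hC.neg hC isHermitian_zero (by simp),
      lagMap_shear_graph hC.neg isHermitian_zero hC.neg (by simp),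
      lagMap_shear_graph hC.neg hB (hB.add hC.neg) rfl,
      ← hf.map _ (rot_symplectic n), lagMap_rot_zero,
      lagMap_rot_graph hC.neg hCi (by rw [Matrix.neg_mul, hCC]) (by rw [Matrix.mul_neg, hCC']),
      lagMap_rot_graph (hB.add hC.neg) hSS' (by rw [hBC, Matrix.neg_mul, hinv])
        (by rw [hBC, Matrix.mul_neg, hinv']),
      hf.graph_graph_vert]
    -- `r⁻² - S'² = (r⁻¹ S')ᴴ (-B) (r⁻¹ S')` because `S² = r² - B`.
    have hcong : scal n (r⁻¹ ^ 2) - S' * S' =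
        ((r⁻¹ : ℂ) • S')ᴴ * (-B) * ((r⁻¹ : ℂ) • S') := by
      have hB' : -B = S * S - scal n (r ^ 2) := by rw [hSS]; abel
      have e : S' * (S * S) * S' = 1 := by
        rw [← Matrix.mul_assoc, h', Matrix.one_mul, h]
      rw [conjTranspose_smul, hS'.eq, hB', Matrix.smul_mul, Matrix.smul_mul, Matrix.mul_smul,
        Matrix.mul_sub, Matrix.sub_mul, e, smul_sub, smul_sub]
      simp only [scal, Matrix.mul_smul, Matrix.smul_mul, Matrix.mul_one, smul_smul]
      congr 1
      · simp [pow_two]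
      · have : star (r⁻¹ : ℂ) * ((r⁻¹ : ℂ) * ((r ^ 2 : ℝ) : ℂ)) = 1 := by
          simp; field_simp
        rw [this, one_smul]
    rw [hcong, negIdxM_congr (P' := (r : ℂ) • S)]
    · rw [Matrix.smul_mul, Matrix.mul_smul, smul_smul, h', inv_mul_cancel₀ hrC, one_smul]
    · rw [Matrix.smul_mul, Matrix.mul_smul, smul_smul, h, mul_inv_cancel₀ hrC, one_smul]
  linarith

/-! ### The inverse index -/

/-- The swap map as a linear equivalence. -/
noncomputable def swapEquiv (n : ℕ) : SympSpace n ≃ₗ[ℂ] SympSpace n :=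
  LinearEquiv.prodComm ℂ _ _

theorem omegaForm_swap {n : ℕ} (u v : SympSpace n) :
    omegaForm (swapEquiv n u) (swapEquiv n v) = -1 * omegaForm u v := by
  simp [omegaForm, swapEquiv]

/-- The inverse `L⁻¹` of a Lagrangian plane. -/
noncomputable def lagInv {n : ℕ} (L : LagGr n) : LagGr n :=
  ⟨L.val.map (swapEquiv n).toLinearMap,
    L.property.map _ (neg_ne_zero.2 one_ne_zero) omegaForm_swap⟩

theorem mem_lagInv {n : ℕ} (L : LagGr n) (x y : Fin n → ℂ) :
    (x, y) ∈ (lagInv L).val ↔ (y, x) ∈ L.val :=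
  Submodule.mem_map_equiv (e := swapEquiv n) (p := L.val)

/-- `f(L₃⁻¹, L₂⁻¹, L₁⁻¹)` again satisfies the Duistermaat axioms. -/
theorem SatisfiesDuiAxioms.inverse {n : ℕ} {f : LagGr n → LagGr n → LagGr n → ℤ}
    (hf : SatisfiesDuiAxioms f) :
    SatisfiesDuiAxioms fun L₁ L₂ L₃ => f (lagInv L₃) (lagInv L₂) (lagInv L₁) := by
  refine ⟨?_, ?_, ?_⟩
  · rintro A hA L₁ L₂ L₃ h₁ h₂ h₃
    have e₁ : lagMap (rot n) (rot_symplectic n) (lagInv L₁) = lagGraph 0 isHermitian_zero := by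
      ext1; ext ⟨x, y⟩
      rw [mem_lagMap]
      change (-y, x) ∈ (lagInv L₁).val ↔ (x, y) ∈ graphOf 0
      rw [mem_lagInv, h₁, mem_graphOf, mem_graphOf]
      simp
    have e₂ : lagMap (rot n) (rot_symplectic n) (lagInv L₂) = lagGraph (-A) hA.neg := by
      ext1; ext ⟨x, y⟩
      rw [mem_lagMap]
      change (-y, x) ∈ (lagInv L₂).val ↔ (x, y) ∈ graphOf (-A)
      rw [mem_lagInv, h₂, mem_graphOf, mem_graphOf, neg_mulVec, neg_eq_iff_eq_neg]
    have e₃ : lagMap (rot n) (rot_symplectic n) (lagInv L₃) = lagVert n := by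
      ext1; ext ⟨x, y⟩
      rw [mem_lagMap]
      change (-y, x) ∈ (lagInv L₃).val ↔ (x, y) ∈ vertSub n
      rw [mem_lagInv, h₃, mem_vertSub, mem_vertSub]
    change f (lagInv L₃) (lagInv L₂) (lagInv L₁) = _
    rw [← hf.map _ (rot_symplectic n), e₁, e₂, e₃, hf.vert_graph_zero, neg_neg]
  · intro S hS L₁ L₂ L₃ M₁ M₂ M₃ h₁ h₂ h₃
    -- Conjugation by the swap map preserves symplecticity, since the two signs cancel.
    let T := (swapEquiv n).trans (S.trans (swapEquiv n))
    have hT : IsSymplecticMap T := by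
      intro u v
      change omegaForm (swapEquiv n (S (swapEquiv n u))) (swapEquiv n (S (swapEquiv n v))) = _
      rw [omegaForm_swap, hS, omegaForm_swap]
      ring
    have key : ∀ L M : LagGr n, M.val = L.val.map S.toLinearMap →
        (lagInv M).val = (lagInv L).val.map T.toLinearMap := by
      intro L M h
      ext ⟨x, y⟩
      rw [mem_lagInv, h]
      refine (Submodule.mem_map_equiv (e := S) (p := L.val)).trans
        (Iff.trans ?_ (Submodule.mem_map_equiv (e := T) (p := (lagInv L).val)).symm)
      change _ ↔ ((S.symm (y, x)).2, (S.symm (y, x)).1) ∈ (lagInv L).val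
      rw [mem_lagInv]
    exact hf.2.1 T hT _ _ _ _ _ _ (key _ _ h₃) (key _ _ h₂) (key _ _ h₁)
  · intro L₁ L₂ L₃ L₄
    have := hf.2.2 (lagInv L₄) (lagInv L₃) (lagInv L₂) (lagInv L₁)
    simp only
    linarith

/-- Inversion identity: `f(L₁, L₂, L₃) = f(L₃⁻¹, L₂⁻¹, L₁⁻¹)`. -/
theorem duistermaat_index_inverse (n : ℕ) (hn : 1 ≤ n)
    (f : LagGr n → LagGr n → LagGr n → ℤ) (hf : SatisfiesDuiAxioms f)
    (L₁ L₂ L₃ M₁ M₂ M₃ : LagGr n)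
    (h₁ : M₁.val = (L₁.val).map (swapMap n))
    (h₂ : M₂.val = (L₂.val).map (swapMap n))
    (h₃ : M₃.val = (L₃.val).map (swapMap n)) :
    f L₁ L₂ L₃ = f M₃ M₂ M₁ := by
  have e₁ : M₁ = lagInv L₁ := Subtype.ext h₁
  have e₂ : M₂ = lagInv L₂ := Subtype.ext h₂
  have e₃ : M₃ = lagInv L₃ := Subtype.ext h₃
  rw [e₁, e₂, e₃]
  exact hf.unique hf.inverse L₁ L₂ L₃
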